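/- Let K be a field, let q ∈ K with q ≠ 0, and define f(x,y) := qx − q⁻¹y and h(x,y) := x − y. Let w_1,…,w_n, y_1,…,y_n ∈ K be such that h(w_i,y_j) ≠ 0 and f(w_i,y_j) ≠ 0 for all 1 ≤ i,j ≤ n, and such that y_1,…,y_n are pairwise distinct. Then ∑_{σ∈S_n} sgn(σ) · [∏_{1≤i<j≤n} f(w_{σ(i)},w_{σ(j)})] / [∏_{1≤i≤j≤n} h(w_{σ(j)},y_i)·f(w_{σ(i)},y_j)] = det_{1≤i,j≤n}( 1/(f(w_i,y_j)·h(w_i,y_j)) ) / ∏_{1≤i<j≤n} h(y_j,y_i). -/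

import Mathlib

open Finset

/-!
The identity holds with arbitrary affine functions `f_i(x) = a_i - b_i x` in place of
`f(w_i, x) = q w_i - q⁻¹ x`. The proof is by induction on `n`, expanding both sides according to
the value `k = σ(1)`. The left side contributes the factor
`∏_{i ≠ k} f_k(w_i) / (∏_i (w_i - y_1) ∏_j f_k(y_j))`. By Lagrange interpolation of
`∏_{i ≠ k} (x - w_i)` at the nodes `y_j`, this factor is, up to the constant `∏_i (w_i - y_1)`, the
`k`-th entry of a linear combination of the columns of the matrix, in which the first column has
coefficient `∏_i (w_i - y_1) / ∏_{j > 1} (y_j - y_1)`. So on the right side one replaces the first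
column by this combination and expands the determinant along it.
-/

section Combinatorics

lemma prod_erase_zero_fin {M : Type*} [CommMonoid M] {n : ℕ} (g : Fin (n + 1) → M) :
    ∏ i ∈ univ.erase 0, g i = ∏ i : Fin n, g i.succ := by
  rw [← compl_singleton, ← Fin.image_succ_univ,
    prod_image fun _ _ _ _ h => Fin.succ_injective n h]

lemma prod_filter_lt_fin_succ {M : Type*} [CommMonoid M] {n : ℕ}
    (g : Fin (n + 1) → Fin (n + 1) → M) :
    ∏ p ∈ univ.filter (fun p : Fin (n + 1) × Fin (n + 1) => p.1 < p.2), g p.1 p.2 =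
      (∏ j : Fin n, g 0 j.succ) *
        ∏ p ∈ univ.filter (fun p : Fin n × Fin n => p.1 < p.2), g p.1.succ p.2.succ := by
  simp [prod_filter, Fintype.prod_prod_type, Fin.prod_univ_succ]

lemma prod_filter_le_fin_succ {M : Type*} [CommMonoid M] {n : ℕ}
    (g : Fin (n + 1) → Fin (n + 1) → M) :
    ∏ p ∈ univ.filter (fun p : Fin (n + 1) × Fin (n + 1) => p.1 ≤ p.2), g p.1 p.2 =
      (∏ j : Fin (n + 1), g 0 j) *
        ∏ p ∈ univ.filter (fun p : Fin n × Fin n => p.1 ≤ p.2), g p.1.succ p.2.succ := by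
  simp [prod_filter, Fintype.prod_prod_type, Fin.prod_univ_succ]

/-- The permutation of `Fin (n + 1)` sending `0` to `k` and `i.succ` to `k.succAbove (τ i)`. Unlike
`Equiv.Perm.decomposeFin`, it matches the minors in the Laplace expansion of a determinant. -/
def permCons {n : ℕ} (k : Fin (n + 1)) (τ : Equiv.Perm (Fin n)) : Equiv.Perm (Fin (n + 1)) :=
  k.cycleRange⁻¹ * Equiv.Perm.decomposeFin.symm (0, τ)

lemma permCons_zero {n : ℕ} (k : Fin (n + 1)) (τ : Equiv.Perm (Fin n)) :
    permCons k τ 0 = k := by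
  simp [permCons, Equiv.Perm.inv_def]

lemma permCons_succ {n : ℕ} (k : Fin (n + 1)) (τ : Equiv.Perm (Fin n)) (i : Fin n) :
    permCons k τ i.succ = k.succAbove (τ i) := by
  simp [permCons, Equiv.Perm.inv_def]

lemma sign_permCons {n : ℕ} (k : Fin (n + 1)) (τ : Equiv.Perm (Fin n)) :
    Equiv.Perm.sign (permCons k τ) = (-1) ^ (k : ℕ) * Equiv.Perm.sign τ := by
  simp [permCons, Fin.sign_cycleRange]

lemma permCons_bijective (n : ℕ) :
    Function.Bijective (fun x : Fin (n + 1) × Equiv.Perm (Fin n) => permCons x.1 x.2) := by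
  rw [Fintype.bijective_iff_injective_and_card]
  constructor
  · rintro ⟨k, τ⟩ ⟨l, ρ⟩ h
    obtain rfl : k = l := by
      simpa only [permCons_zero] using congrArg (fun σ : Equiv.Perm (Fin (n + 1)) => σ 0) h
    simpa [permCons] using h
  · simp [Fintype.card_perm, Nat.factorial_succ]

lemma sum_sign_mul_perm_fin_succ {R : Type*} [Ring R] {n : ℕ}
    (F : Equiv.Perm (Fin (n + 1)) → R) :
    ∑ σ, ((Equiv.Perm.sign σ : ℤ) : R) * F σ =
      ∑ k : Fin (n + 1), (-1) ^ (k : ℕ) *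
        ∑ τ, ((Equiv.Perm.sign τ : ℤ) : R) * F (permCons k τ) := by
  rw [← (permCons_bijective n).sum_comp, Fintype.sum_prod_type]
  simp [sign_permCons, mul_sum, mul_assoc]

end Combinatorics

lemma mul_det_eq_sum_combination_of_columns {R : Type*} [CommRing R] {n : ℕ}
    (A : Matrix (Fin (n + 1)) (Fin (n + 1)) R) (c : Fin (n + 1) → R) :
    c 0 * A.det = ∑ k : Fin (n + 1), (-1) ^ (k : ℕ) * (∑ j, c j * A k j) *
      (A.submatrix k.succAbove Fin.succ).det := by
  have minor_eq (k : Fin (n + 1)) :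
      (A.updateCol 0 fun k => ∑ j, c j • A k j).submatrix k.succAbove Fin.succ =
        A.submatrix k.succAbove Fin.succ := by
    ext i j
    simp
  rw [← smul_eq_mul, ← A.det_updateCol_sum 0 c, Matrix.det_succ_column_zero]
  simp_rw [minor_eq, Matrix.updateCol_self, smul_eq_mul]

section Interpolation

variable {R K ι κ : Type*} [CommRing R] [Field K]

lemma eval_homogenize_prod_X_sub_C (s : Finset ι) (u : ι → R) (a b : R) :
    MvPolynomial.eval ![a, b]
      ((∏ i ∈ s, (Polynomial.X - Polynomial.C (u i))).homogenize #s) =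
        ∏ i ∈ s, (a - b * u i) := by
  rw [card_eq_sum_ones, Polynomial.homogenize_finsetProd
    fun i _ => Polynomial.natDegree_X_sub_C_le (u i)]
  simp [mul_comm b]

lemma lagrange_basis_eq_C_mul_prod [DecidableEq κ] (t : Finset κ) (v : κ → K) (j : κ) :
    Lagrange.basis t v j = Polynomial.C (∏ k ∈ t.erase j, (v j - v k)⁻¹) *
      ∏ k ∈ t.erase j, (Polynomial.X - Polynomial.C (v k)) := by
  simp only [Lagrange.basis, Lagrange.basisDivisor, prod_mul_distrib, map_prod]

lemma prod_sub_mul_prod_erase_inv_sub_comm [DecidableEq κ] {s : Finset ι} {t : Finset κ}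
    (hst : #t = #s + 1) (u : ι → K) (v : κ → K) {j : κ} (hj : j ∈ t) :
    (∏ i ∈ s, (v j - u i)) * ∏ k ∈ t.erase j, (v j - v k)⁻¹ =
      (∏ i ∈ s, (u i - v j)) * ∏ k ∈ t.erase j, (v k - v j)⁻¹ := by
  have hcard : #(t.erase j) = #s := by rw [card_erase_of_mem hj, hst, Nat.add_sub_cancel]
  simp_rw [← neg_sub _ (v j), inv_neg, prod_neg, hcard]
  rw [mul_mul_mul_comm, ← mul_pow, neg_one_mul, neg_neg, one_pow, one_mul]

/- Homogenized, Lagrange's formula for `∏ (X - u i)` may be evaluated at the point `(a : b)` of the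
projective line, so that `b = 0` needs no separate treatment. -/
lemma prod_sub_mul_eq_sum_interpolation [DecidableEq κ] {s : Finset ι} {t : Finset κ}
    (hst : #t = #s + 1) (u : ι → K) {v : κ → K} (hv : Set.InjOn v t) (a b : K) :
    ∏ i ∈ s, (a - b * u i) =
      ∑ j ∈ t, (∏ i ∈ s, (u i - v j)) * (∏ k ∈ t.erase j, (v k - v j)⁻¹) *
        ∏ k ∈ t.erase j, (a - b * v k) := by
  have hdeg : (∏ i ∈ s, (Polynomial.X - Polynomial.C (u i))).degree <
      (#t : WithBot ℕ) := by
    rw [Polynomial.degree_prod]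
    simp only [Polynomial.degree_X_sub_C, sum_const, nsmul_eq_mul, mul_one, hst]
    exact_mod_cast Nat.lt_succ_self #s
  have hinterp := congrArg (fun P => MvPolynomial.eval ![a, b] (P.homogenize #s))
    (Lagrange.eq_interpolate hv hdeg)
  rw [eval_homogenize_prod_X_sub_C, Lagrange.interpolate_apply, Polynomial.homogenize_finsetSum,
    map_sum] at hinterp
  rw [hinterp]
  refine sum_congr rfl fun j hj => ?_
  have hcard : #s = #(t.erase j) := by rw [card_erase_of_mem hj, hst, Nat.add_sub_cancel]
  rw [lagrange_basis_eq_C_mul_prod, ← mul_assoc, ← map_mul, Polynomial.homogenize_C_mul, map_mul,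
    MvPolynomial.eval_C, hcard, eval_homogenize_prod_X_sub_C, Polynomial.eval_prod]
  simp only [Polynomial.eval_sub, Polynomial.eval_X, Polynomial.eval_C]
  rw [prod_sub_mul_prod_erase_inv_sub_comm hst u v hj]

lemma prod_div_prod_eq_sum_partial_fractions [DecidableEq κ] {s : Finset ι} {t : Finset κ}
    (hst : #t = #s + 1) (u : ι → K) {v : κ → K} (hv : Set.InjOn v t) {a b : K}
    (hab : ∀ j ∈ t, a - b * v j ≠ 0) :
    (∏ i ∈ s, (a - b * u i)) / ∏ j ∈ t, (a - b * v j) =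
      ∑ j ∈ t, (∏ i ∈ s, (u i - v j)) * (∏ k ∈ t.erase j, (v k - v j)⁻¹) / (a - b * v j) := by
  rw [prod_sub_mul_eq_sum_interpolation hst u hv, sum_div]
  refine sum_congr rfl fun j hj => ?_
  rw [← prod_erase_mul t _ hj, mul_comm (∏ k ∈ t.erase j, (a - b * v k)), mul_div_mul_right]
  exact prod_ne_zero_iff.2 fun k hk => hab k (mem_of_mem_erase hk)

end Interpolation

section Antisymmetrization

variable {K : Type*} [Field K]

/-- The rational expression `∏_{i < j} f_i(w_j) / ∏_{i ≤ j} (w_j - y_i) f_i(y_j)`, where `f_i` is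
the affine function `f_i(x) = a_i - b_i x`. -/
def antisymmKernel {n : ℕ} (a b w y : Fin n → K) : K :=
  (∏ p ∈ univ.filter (fun p : Fin n × Fin n => p.1 < p.2), (a p.1 - b p.1 * w p.2)) /
    ∏ p ∈ univ.filter (fun p : Fin n × Fin n => p.1 ≤ p.2),
      ((w p.2 - y p.1) * (a p.1 - b p.1 * y p.2))

/-- The antisymmetrization of `antisymmKernel a b w y` under simultaneous permutations of the
points `w` and of the coefficients `a`, `b` of the affine functions attached to them. -/
def antisymmSum {n : ℕ} (a b w y : Fin n → K) : K :=
  ∑ σ : Equiv.Perm (Fin n),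
    ((Equiv.Perm.sign σ : ℤ) : K) * antisymmKernel (a ∘ σ) (b ∘ σ) (w ∘ σ) y

/-- The matrix with entries `1 / (f_i(y_j) (w_i - y_j))`, where `f_i(x) = a_i - b_i x`; it plays
the role of the Cauchy matrix `1 / (w_i - y_j)`. -/
def affineCauchyMatrix {n : ℕ} (a b w y : Fin n → K) : Matrix (Fin n) (Fin n) K :=
  Matrix.of fun i j => 1 / ((a i - b i * y j) * (w i - y j))

variable {n : ℕ}

lemma antisymmKernel_succ (a b w y : Fin (n + 1) → K) :
    antisymmKernel a b w y =
      (∏ j : Fin n, (a 0 - b 0 * w j.succ)) /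
          ((∏ j, (w j - y 0)) * ∏ j, (a 0 - b 0 * y j)) *
        antisymmKernel (a ∘ Fin.succ) (b ∘ Fin.succ) (w ∘ Fin.succ) (y ∘ Fin.succ) := by
  rw [antisymmKernel, prod_filter_lt_fin_succ fun i j => a i - b i * w j,
    prod_filter_le_fin_succ fun i j => (w j - y i) * (a i - b i * y j), prod_mul_distrib,
    mul_div_mul_comm]
  rfl

lemma antisymmKernel_comp_permCons (a b w y : Fin (n + 1) → K) (k : Fin (n + 1))
    (τ : Equiv.Perm (Fin n)) :
    antisymmKernel (a ∘ permCons k τ) (b ∘ permCons k τ) (w ∘ permCons k τ) y =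
      (∏ i, (a k - b k * w (k.succAbove i))) /
          ((∏ j, (w j - y 0)) * ∏ j, (a k - b k * y j)) *
        antisymmKernel (a ∘ k.succAbove ∘ τ) (b ∘ k.succAbove ∘ τ) (w ∘ k.succAbove ∘ τ)
          (y ∘ Fin.succ) := by
  have comp_succ : permCons k τ ∘ Fin.succ = k.succAbove ∘ τ := funext (permCons_succ k τ)
  rw [antisymmKernel_succ]
  simp only [Function.comp_assoc, comp_succ, Function.comp_apply, permCons_zero, permCons_succ]
  rw [Equiv.prod_comp (permCons k τ) fun j => w j - y 0,
    Equiv.prod_comp τ fun i => a k - b k * w (k.succAbove i)]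

lemma antisymmSum_succ (a b w y : Fin (n + 1) → K) :
    antisymmSum a b w y = ∑ k : Fin (n + 1), (-1) ^ (k : ℕ) *
      ((∏ i, (a k - b k * w (k.succAbove i))) /
          ((∏ j, (w j - y 0)) * ∏ j, (a k - b k * y j)) *
        antisymmSum (a ∘ k.succAbove) (b ∘ k.succAbove) (w ∘ k.succAbove) (y ∘ Fin.succ)) := by
  rw [antisymmSum, sum_sign_mul_perm_fin_succ]
  refine sum_congr rfl fun k _ => ?_
  congr 1
  rw [antisymmSum, mul_sum]
  refine sum_congr rfl fun τ _ => ?_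
  rw [antisymmKernel_comp_permCons, mul_left_comm]
  rfl

lemma sum_mul_affineCauchyMatrix {a b w y : Fin (n + 1) → K} (hw : ∀ i j, w i - y j ≠ 0)
    (hf : ∀ i j, a i - b i * y j ≠ 0) (hy : Function.Injective y) (k : Fin (n + 1)) :
    ∑ j, ((∏ i, (w i - y j)) * ∏ l ∈ univ.erase j, (y l - y j)⁻¹) *
        affineCauchyMatrix a b w y k j =
      (∏ i, (a k - b k * w (k.succAbove i))) / ∏ j, (a k - b k * y j) := by
  rw [prod_div_prod_eq_sum_partial_fractions (by simp) (fun i => w (k.succAbove i)) hy.injOn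
    fun j _ => hf k j]
  refine sum_congr rfl fun j _ => ?_
  have := hw k j
  have := hf k j
  rw [Fin.prod_univ_succAbove (fun i => w i - y j) k, affineCauchyMatrix, Matrix.of_apply]
  field_simp

lemma det_affineCauchyMatrix_div_succ {a b w y : Fin (n + 1) → K} (hw : ∀ i j, w i - y j ≠ 0)
    (hf : ∀ i j, a i - b i * y j ≠ 0) (hy : Function.Injective y) :
    (affineCauchyMatrix a b w y).det /
        ∏ p ∈ univ.filter (fun p : Fin (n + 1) × Fin (n + 1) => p.1 < p.2), (y p.2 - y p.1) =
      ∑ k : Fin (n + 1), (-1) ^ (k : ℕ) *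
        ((∏ i, (a k - b k * w (k.succAbove i))) /
            ((∏ j, (w j - y 0)) * ∏ j, (a k - b k * y j)) *
          ((affineCauchyMatrix (a ∘ k.succAbove) (b ∘ k.succAbove) (w ∘ k.succAbove)
              (y ∘ Fin.succ)).det /
            ∏ p ∈ univ.filter (fun p : Fin n × Fin n => p.1 < p.2),
              (y p.2.succ - y p.1.succ))) := by
  have hprod : ∏ j, (w j - y 0) ≠ 0 := prod_ne_zero_iff.2 fun j _ => hw j 0
  have hexpand := mul_det_eq_sum_combination_of_columns (affineCauchyMatrix a b w y)
    fun j => (∏ i, (w i - y j)) * ∏ l ∈ univ.erase j, (y l - y j)⁻¹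
  simp only [sum_mul_affineCauchyMatrix hw hf hy] at hexpand
  rw [prod_erase_zero_fin, prod_inv_distrib, mul_assoc, ← eq_inv_mul_iff_mul_eq₀ hprod,
    ← div_eq_inv_mul] at hexpand
  rw [prod_filter_lt_fin_succ fun i j => y j - y i, ← div_div, hexpand, mul_sum, sum_div]
  refine sum_congr rfl fun k _ => ?_
  have minor_eq : (affineCauchyMatrix a b w y).submatrix k.succAbove Fin.succ =
      affineCauchyMatrix (a ∘ k.succAbove) (b ∘ k.succAbove) (w ∘ k.succAbove) (y ∘ Fin.succ) :=
    rfl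
  rw [minor_eq]
  simp only [div_eq_mul_inv, mul_inv]
  ring

theorem statement19_general (a b w y : Fin n → K) (hw : ∀ i j, w i - y j ≠ 0)
    (hf : ∀ i j, a i - b i * y j ≠ 0) (hy : Function.Injective y) :
    antisymmSum a b w y = (affineCauchyMatrix a b w y).det /
      ∏ p ∈ univ.filter (fun p : Fin n × Fin n => p.1 < p.2), (y p.2 - y p.1) := by
  induction n with
  | zero => simp [antisymmSum, antisymmKernel]
  | succ n ih =>
    rw [antisymmSum_succ, det_affineCauchyMatrix_div_succ hw hf hy]
    refine sum_congr rfl fun k _ => ?_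
    rw [ih (a ∘ k.succAbove) (b ∘ k.succAbove) (w ∘ k.succAbove) (y ∘ Fin.succ)
      (fun _ _ => hw _ _) (fun _ _ => hf _ _) (hy.comp (Fin.succ_injective n))]
    rfl

end Antisymmetrization

/-- the antisymmetrizer identity, with f(x,y) = qx - q⁻¹y and h(x,y) = x - y:
∑_{σ∈S_n} sgn(σ)·∏_{i<j}f(w_{σ(i)},w_{σ(j)}) / ∏_{i≤j}h(w_{σ(j)},y_i)f(w_{σ(i)},y_j)
= det(1/(f(w_i,y_j)h(w_i,y_j))) / ∏_{i<j}h(y_j,y_i). -/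
theorem statement19 {K : Type*} [Field K] (n : ℕ) (q : K) (hq : q ≠ 0)
    (w y : Fin n → K)
    (hh : ∀ i j, w i - y j ≠ 0) (hf : ∀ i j, q * w i - q⁻¹ * y j ≠ 0)
    (hy : Function.Injective y) :
    ∑ σ : Equiv.Perm (Fin n), ((Equiv.Perm.sign σ : ℤ) : K) *
        ((∏ p ∈ Finset.univ.filter (fun p : Fin n × Fin n => p.1 < p.2),
            (q * w (σ p.1) - q⁻¹ * w (σ p.2))) /
          ∏ p ∈ Finset.univ.filter (fun p : Fin n × Fin n => p.1 ≤ p.2),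
            ((w (σ p.2) - y p.1) * (q * w (σ p.1) - q⁻¹ * y p.2))) =
      Matrix.det (Matrix.of fun i j : Fin n =>
          1 / ((q * w i - q⁻¹ * y j) * (w i - y j))) /
        ∏ p ∈ Finset.univ.filter (fun p : Fin n × Fin n => p.1 < p.2), (y p.2 - y p.1) :=
  statement19_general (fun i => q * w i) (fun _ => q⁻¹) w y hh hf hy
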